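/- Let 𝒳₀ ⊆ ℝⁿ be open, 𝒳 ⊆ 𝒳₀, 𝒰 and 𝒴 complete metric spaces, f : 𝒳₀ × 𝒰 → ℝⁿ continuous, and h : 𝒳 → 𝒴 continuous. Let γ ∈ 𝒦∞ and suppose that for each compact U ⊆ 𝒰 there exists a U-decrease function V_U with |h(Z_{V_U})| ≤ γ(|U|). For i = 1,2, let ω_i : [0,∞) → 𝒰 be Lebesgue-measurable and precompact with ω_i(t) → ω_i^∞ as t → ∞, and let ξ_i : [0,∞) → 𝒳 be locally Lipschitz with ξ_i'(t) = f(ξ_i(t), ω_i(t)) for almost every t ≥ 0; set η_i := h∘ξ_i. Then the limits η_i^∞ := lim_{t→∞} η_i(t) exist and d(η₁^∞, η₂^∞) ≤ γ(d(ω₁^∞, ω₂^∞)); that is, the behavior of the system ẋ = f(x,u), y = h(x) has incremental limit gain γ. -/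

import Mathlib

open Filter Topology MeasureTheory
open scoped ENNReal NNReal

noncomputable def aa {M : Type*} [PseudoMetricSpace M] (ω : ℝ → M) : ℝ≥0∞ :=
  Filter.limsup (fun p : ℝ × ℝ => edist (ω p.1) (ω p.2)) (Filter.atTop ×ˢ Filter.atTop)

def KInfty (γ : ℝ≥0 → ℝ≥0) : Prop :=
  Continuous γ ∧ StrictMono γ ∧ γ 0 = 0 ∧ Filter.Tendsto γ Filter.atTop Filter.atTop

noncomputable def extK (γ : ℝ≥0 → ℝ≥0) : ℝ≥0∞ → ℝ≥0∞ :=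
  fun x => if x = ⊤ then ⊤ else ↑(γ x.toNNReal)

def CauchyGain {U Y : Type*} [PseudoMetricSpace U] [PseudoMetricSpace Y]
    (R : Set ((ℝ → U) × (ℝ → Y))) (γ : ℝ≥0 → ℝ≥0) : Prop :=
  ∀ p ∈ R, aa p.2 ≤ extK γ (aa p.1)

def IncGain {U Y : Type*} [PseudoMetricSpace U] [PseudoMetricSpace Y]
    (R : Set ((ℝ → U) × (ℝ → Y))) (κ : ℝ≥0 → ℝ≥0) : Prop :=
  ∀ p₁ ∈ R, ∀ p₂ ∈ R, ∀ u₁ u₂ : U,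
    Filter.Tendsto p₁.1 Filter.atTop (nhds u₁) → Filter.Tendsto p₂.1 Filter.atTop (nhds u₂) →
    Filter.limsup (fun t => edist (p₁.2 t) (p₂.2 t)) Filter.atTop ≤ ↑(κ (nndist u₁ u₂))

def convTo {U : Type*} [PseudoMetricSpace U] (ω : ℝ → U) (U₀ : Set U) : Prop :=
  ∀ ε > 0, ∃ T : ℝ, 0 ≤ T ∧ ∀ t ≥ T, ∃ u' ∈ U₀, dist (ω t) u' ≤ ε

def omegaLim {U : Type*} [PseudoMetricSpace U] (ω : ℝ → U) : Set U :=
  {u | ∃ t : ℕ → ℝ, Filter.Tendsto t Filter.atTop Filter.atTop ∧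
       Filter.Tendsto (fun i => ω (t i)) Filter.atTop (nhds u)}

def Precomp {U : Type*} [TopologicalSpace U] (ω : ℝ → U) : Prop :=
  ∃ K : Set U, IsCompact K ∧ ∀ t : ℝ, 0 ≤ t → ω t ∈ K

def cascade {U Y Z : Type*} (R : Set ((ℝ → U) × (ℝ → Y))) (S : Set ((ℝ → Y) × (ℝ → Z))) :
    Set ((ℝ → U) × (ℝ → Z)) :=
  {p | ∃ η : ℝ → Y, (p.1, η) ∈ R ∧ (η, p.2) ∈ S}

def CauchyGainOn {U Y : Type*} [PseudoMetricSpace U] [PseudoMetricSpace Y]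
    (R : Set ((ℝ → U) × (ℝ → Y))) (γ : ℝ≥0 → ℝ≥0) (U₀ : Set U) : Prop :=
  ∀ p ∈ R, convTo p.1 U₀ → aa p.2 ≤ extK γ (aa p.1)

def IncGainOn {U Y : Type*} [PseudoMetricSpace U] [PseudoMetricSpace Y]
    (R : Set ((ℝ → U) × (ℝ → Y))) (κ : ℝ≥0 → ℝ≥0) (U₀ : Set U) : Prop :=
  ∀ p₁ ∈ R, ∀ p₂ ∈ R, ∀ u₁ u₂ : U, u₁ ∈ U₀ → u₂ ∈ U₀ →
    Filter.Tendsto p₁.1 Filter.atTop (nhds u₁) → Filter.Tendsto p₂.1 Filter.atTop (nhds u₂) →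
    Filter.limsup (fun t => edist (p₁.2 t) (p₂.2 t)) Filter.atTop ≤ ↑(κ (nndist u₁ u₂))

def ZV {E : Type*} (X : Set E) (V : E → ℝ) : Set E := {x ∈ X | V x = 0}

def UDecrease {E 𝒰 : Type*} [NormedAddCommGroup E] [NormedSpace ℝ E] [PseudoMetricSpace 𝒰]
    (X₀ X : Set E) (f : E → 𝒰 → E) (Uset : Set 𝒰) (V : E → ℝ) : Prop :=
  (∀ x ∈ X, 0 ≤ V x) ∧ ContinuousOn V X ∧
  (∀ a b : ℝ, 0 ≤ a → a ≤ b → IsCompact {x ∈ X | a ≤ V x ∧ V x ≤ b}) ∧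
  (∀ x ∈ X, V x ≠ 0 → ∃ (W : Set E) (Vt : E → ℝ), IsOpen W ∧ x ∈ W ∧ W ⊆ X₀ ∧
    ContDiffOn ℝ 1 Vt W ∧ (∀ z ∈ W ∩ X, Vt z = V z) ∧
    ∀ u ∈ Uset, fderiv ℝ Vt x (f x u) < 0)

/-!
The input converges to `u`, so it eventually lies in any neighbourhood of a compact set `U ∋ u`.
On a band `{a ≤ V ≤ b}` with `0 < a`, which is compact by properness, a `U`-decrease function `V`
decreases along trajectories at a positive rate, uniformly over the inputs near `U`.  Hence
sublevel sets of `V` are eventually invariant, and a trajectory along which `V` is bounded reaches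
each of them, so `V` tends to zero along it.  A decrease function for a compact set containing the
whole input confines the trajectory to a compact set, and so the output converges to `h(Z_V)`.
Taking `U = {u}` forces `h(Z_V)` to be a point, the limit of the output; taking `U = {u₁, u₂}`
puts both limits into the closure of the same set `h(Z_V)`, whose diameter is at most
`γ (d(u₁, u₂))`.
-/

open Set

section Topology

variable {A E 𝒴 : Type*} [TopologicalSpace E] [TopologicalSpace 𝒴]

lemma exists_pos_eventually_nhdsSet {K : Set E} (hK : IsCompact K) {P : ℝ → E → Prop}
    (hP : ∀ x, Antitone (P · x)) (hloc : ∀ x ∈ K, ∃ δ > 0, ∀ᶠ y in 𝓝 x, P δ y) :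
    ∃ δ > 0, ∀ᶠ y in 𝓝ˢ K, P δ y := by
  refine hK.induction_on (p := fun S => ∃ δ > 0, ∀ᶠ y in 𝓝ˢ S, P δ y)
    ⟨1, one_pos, by simp⟩ ?_ ?_ fun x hx => ?_
  · rintro S T hST ⟨δ, hδ, hT⟩
    exact ⟨δ, hδ, hT.filter_mono (nhdsSet_mono hST)⟩
  · rintro S T ⟨δ, hδ, hS⟩ ⟨δ', hδ', hT⟩
    refine ⟨min δ δ', lt_min hδ hδ', ?_⟩
    rw [nhdsSet_union, eventually_sup]
    exact ⟨hS.mono fun y => hP y (min_le_left _ _), hT.mono fun y => hP y (min_le_right _ _)⟩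
  · obtain ⟨δ, hδ, hx⟩ := hloc x hx
    exact ⟨{y | ∀ᶠ z in 𝓝 y, P δ z}, mem_nhdsWithin_of_mem_nhds hx.eventually_nhds, δ, hδ,
      eventually_nhdsSet_iff_forall.2 fun _ hy => hy⟩

lemma tendsto_comp_nhdsSet_image {R : Type*} [TopologicalSpace R] [T2Space R] {l : Filter A}
    {C : Set E} (hC : IsCompact C) {V : E → R} (hV : ContinuousOn V C) {h : E → 𝒴}
    (hh : ContinuousOn h C) {ξ : A → E} (hξ : ∀ᶠ t in l, ξ t ∈ C) {r : R}
    (hr : Tendsto (V ∘ ξ) l (𝓝 r)) :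
    Tendsto (h ∘ ξ) l (𝓝ˢ (h '' {x ∈ C | V x = r})) := by
  refine (tendsto_iff_ultrafilter _ _ _).2 fun F hF => ?_
  have hFC : ∀ᶠ t in (F : Filter A), ξ t ∈ C := hF hξ
  obtain ⟨x, hxC, hFx⟩ := hC.ultrafilter_le_nhds (F.map ξ) (le_principal_iff.2 hFC)
  have hξx : Tendsto ξ F (𝓝[C] x) := tendsto_nhdsWithin_iff.2 ⟨hFx, hFC⟩
  have hVx : V x = r := tendsto_nhds_unique ((hV x hxC).tendsto.comp hξx) (hr.mono_left hF)
  exact ((hh x hxC).tendsto.comp hξx).mono_right (nhds_le_nhdsSet ⟨x, ⟨hxC, hVx⟩, rfl⟩)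

lemma exists_tendsto_nhds_of_tendsto_nhdsSet_subsingleton {l : Filter A} [l.NeBot] {S : Set 𝒴}
    (hS : S.Subsingleton) {η : A → 𝒴} (hη : Tendsto η l (𝓝ˢ S)) : ∃ y, Tendsto η l (𝓝 y) := by
  obtain rfl | ⟨y, rfl⟩ := hS.eq_empty_or_singleton
  · rw [nhdsSet_empty] at hη
    exact absurd (le_bot_iff.1 hη) map_neBot.ne
  · exact ⟨y, hη.mono_right nhdsSet_singleton.le⟩

lemma mem_closure_of_tendsto_nhdsSet [RegularSpace 𝒴] {l : Filter A} [l.NeBot] {S : Set 𝒴}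
    {η : A → 𝒴} {y : 𝒴} (hS : Tendsto η l (𝓝ˢ S)) (hy : Tendsto η l (𝓝 y)) : y ∈ closure S := by
  by_contra hyS
  exact hS.not_tendsto (disjoint_nhdsSet_nhds.2 hyS) hy

lemma edist_le_ediam_of_tendsto_nhdsSet {M : Type*} [PseudoEMetricSpace M] {l : Filter A}
    [l.NeBot] {S : Set M} {η₁ η₂ : A → M} {y₁ y₂ : M} (hS₁ : Tendsto η₁ l (𝓝ˢ S))
    (hS₂ : Tendsto η₂ l (𝓝ˢ S)) (hy₁ : Tendsto η₁ l (𝓝 y₁)) (hy₂ : Tendsto η₂ l (𝓝 y₂)) :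
    edist y₁ y₂ ≤ Metric.ediam S :=
  calc edist y₁ y₂ ≤ Metric.ediam (closure S) :=
        Metric.edist_le_ediam_of_mem (mem_closure_of_tendsto_nhdsSet hS₁ hy₁)
          (mem_closure_of_tendsto_nhdsSet hS₂ hy₂)
    _ = Metric.ediam S := Metric.ediam_closure S

end Topology

section RealAnalysis

lemma locallyLipschitzOn_comp {A B C : Type*} [PseudoEMetricSpace A] [PseudoEMetricSpace B]
    [PseudoEMetricSpace C] {s : Set A} {t : Set B} {g : B → C} {f : A → B}
    (hg : LocallyLipschitzOn t g) (hf : LocallyLipschitzOn s f) (hst : MapsTo f s t) :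
    LocallyLipschitzOn s (g ∘ f) := by
  intro x hx
  obtain ⟨K, t', ht', hK⟩ := hg (hst hx)
  obtain ⟨L, s', hs', hL⟩ := hf hx
  have hpre : f ⁻¹' t' ∈ 𝓝[s] x := (hf.continuousOn x hx).tendsto_nhdsWithin hst ht'
  exact ⟨K * L, s' ∩ f ⁻¹' t', inter_mem hs' hpre,
    hK.comp (hL.mono inter_subset_left) fun _ hy => hy.2⟩

lemma locallyLipschitzOn_of_contDiffAt_extension {E F : Type*} [NormedAddCommGroup E]
    [NormedSpace ℝ E] [NormedAddCommGroup F] [NormedSpace ℝ F] {s : Set E} {V : E → F}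
    (hV : ∀ x ∈ s, ∃ g : E → F, ContDiffAt ℝ 1 g x ∧ V =ᶠ[𝓝[s] x] g) :
    LocallyLipschitzOn s V := by
  intro x hx
  obtain ⟨g, hg, hVg⟩ := hV x hx
  obtain ⟨K, t, ht, hK⟩ := hg.exists_lipschitzOnWith
  refine ⟨K, t ∩ {z | V z = g z}, inter_mem (mem_nhdsWithin_of_mem_nhds ht) hVg, ?_⟩
  rintro y ⟨hy, hVy : V y = g y⟩ z ⟨hz, hVz : V z = g z⟩
  rw [hVy, hVz]
  exact hK hy hz

lemma sub_le_mul_sub_of_ae_deriv_le {v : ℝ → ℝ} {a b c : ℝ} (hab : a ≤ b)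
    (hv : AbsolutelyContinuousOnInterval v a b) (hc : ∀ᵐ t, t ∈ Ioo a b → deriv v t ≤ c) :
    v b - v a ≤ c * (b - a) :=
  calc v b - v a = ∫ t in a..b, deriv v t := hv.integral_deriv_eq_sub.symm
    _ ≤ ∫ _ in a..b, c := by
      refine intervalIntegral.integral_mono_ae_restrict hab hv.intervalIntegrable_deriv
        intervalIntegrable_const ?_
      rw [← restrict_Ioo_eq_restrict_Icc]
      exact (ae_restrict_iff' measurableSet_Ioo).2 hc
    _ = c * (b - a) := by rw [intervalIntegral.integral_const, smul_eq_mul, mul_comm]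

lemma forall_ge_le_of_eventually_nhdsGT_le {v : ℝ → ℝ} {T c : ℝ} (hv : ContinuousOn v (Ici T))
    (hT : v T ≤ c) (hc : ∀ t ≥ T, v t = c → ∀ᶠ s in 𝓝[>] t, v s ≤ c) : ∀ t ≥ T, v t ≤ c := by
  intro t ht
  have hclosed : IsClosed ({s | v s ≤ c} ∩ Icc T t) := by
    rw [inter_comm]
    exact (hv.mono Icc_subset_Ici_self).preimage_isClosed_of_isClosed isClosed_Icc isClosed_Iic
  refine hclosed.Icc_subset_of_forall_mem_nhdsWithin hT ?_ ⟨ht, le_rfl⟩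
  rintro s ⟨hsc : v s ≤ c, hs⟩
  obtain hlt | heq := hsc.lt_or_eq
  · have hcont : Tendsto v (𝓝[>] s) (𝓝 (v s)) :=
      (hv s hs.1).mono_left (nhdsWithin_mono s fun _ hr => hs.1.trans (le_of_lt hr))
    exact (hcont.eventually_lt_const hlt).mono fun _ hr => hr.le
  · exact hc s hs.1 heq

end RealAnalysis

section Decrease

variable {E 𝒰 : Type*} [NormedAddCommGroup E] [NormedSpace ℝ E]
  {X₀ X : Set E} {f : E → 𝒰 → E} {V : E → ℝ} {δ a b c : ℝ} {ω : ℝ → 𝒰} {ξ : ℝ → E}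

/-- The decrease condition with a rate: near `x`, the restriction of `V` to `X` extends to a `C¹`
function whose derivative along `f x u` is at most `-δ`.  The extension may depend on `u`, which
makes this a condition on the point `(x, u)` alone. -/
def DecaysAt (X : Set E) (f : E → 𝒰 → E) (V : E → ℝ) (δ : ℝ) (x : E) (u : 𝒰) : Prop :=
  ∃ g : E → ℝ, ContDiffAt ℝ 1 g x ∧ V =ᶠ[𝓝[X] x] g ∧ fderiv ℝ g x (f x u) ≤ -δ

/-- A state trajectory of `ẋ = f(x, u)` in `X` over the time set `I`, driven by the input `ω`. -/
structure IsTrajectoryOn (X : Set E) (f : E → 𝒰 → E) (ω : ℝ → 𝒰) (ξ : ℝ → E) (I : Set ℝ) :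
    Prop where
  locallyLipschitzOn : LocallyLipschitzOn I ξ
  mapsTo : MapsTo ξ I X
  hasDerivAt : ∀ᵐ t, t ∈ I → HasDerivAt ξ (f (ξ t) (ω t)) t

lemma IsTrajectoryOn.mono {I J : Set ℝ} (hξ : IsTrajectoryOn X f ω ξ J) (hIJ : I ⊆ J) :
    IsTrajectoryOn X f ω ξ I :=
  ⟨hξ.locallyLipschitzOn.mono hIJ, hξ.mapsTo.mono_left hIJ,
    hξ.hasDerivAt.mono fun _ ht hI => ht (hIJ hI)⟩

lemma DecaysAt.antitone (x : E) (u : 𝒰) : Antitone (DecaysAt X f V · x u) := by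
  rintro δ δ' hδ ⟨g, hg, hVg, hlt⟩
  exact ⟨g, hg, hVg, hlt.trans (neg_le_neg hδ)⟩

lemma DecaysAt.deriv_comp_le {t : ℝ} {u : 𝒰} (hV : DecaysAt X f V δ (ξ t) u)
    (hξ : HasDerivAt ξ (f (ξ t) u) t) (hX : ∀ᶠ s in 𝓝 t, ξ s ∈ X) : deriv (V ∘ ξ) t ≤ -δ := by
  obtain ⟨g, hg, hVg, hlt⟩ := hV
  have hderiv : HasDerivAt (g ∘ ξ) (fderiv ℝ g (ξ t) (f (ξ t) u)) t :=
    (hg.differentiableAt one_ne_zero).hasFDerivAt.comp_hasDerivAt t hξ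
  have hξX : Tendsto ξ (𝓝 t) (𝓝[X] ξ t) := tendsto_nhdsWithin_iff.2 ⟨hξ.continuousAt, hX⟩
  have hVξ : V ∘ ξ =ᶠ[𝓝 t] g ∘ ξ := hξX.eventually hVg
  rwa [hVξ.deriv_eq, hderiv.deriv]

lemma IsTrajectoryOn.comp_le_sub (hξ : IsTrajectoryOn X f ω ξ (Icc a b)) (hab : a ≤ b)
    (hV : ∀ t ∈ Icc a b, DecaysAt X f V δ (ξ t) (ω t)) : V (ξ b) ≤ V (ξ a) - δ * (b - a) := by
  have hVlip : LocallyLipschitzOn (ξ '' Icc a b) V := by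
    refine locallyLipschitzOn_of_contDiffAt_extension ?_
    rintro _ ⟨t, ht, rfl⟩
    obtain ⟨g, hg, hVg, -⟩ := hV t ht
    exact ⟨g, hg, hVg.filter_mono (nhdsWithin_mono _ hξ.mapsTo.image_subset)⟩
  obtain ⟨K, hK⟩ := (locallyLipschitzOn_comp hVlip hξ.locallyLipschitzOn
    (mapsTo_image _ _)).exists_lipschitzOnWith_of_compact isCompact_Icc
  rw [← uIcc_of_le hab] at hK
  have hdrop : V (ξ b) - V (ξ a) ≤ -δ * (b - a) := by
    refine sub_le_mul_sub_of_ae_deriv_le hab hK.absolutelyContinuousOnInterval ?_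
    filter_upwards [hξ.hasDerivAt] with t hode ht
    have htI := Ioo_subset_Icc_self ht
    exact (hV t htI).deriv_comp_le (hode htI)
      (eventually_of_mem (Icc_mem_nhds ht.1 ht.2) fun _ hs => hξ.mapsTo hs)
  linarith

variable [PseudoMetricSpace 𝒰] {U : Set 𝒰} {T : ℝ}

lemma UDecrease.nonneg (hV : UDecrease X₀ X f U V) {x : E} (hx : x ∈ X) : 0 ≤ V x :=
  hV.1 x hx

lemma UDecrease.continuousOn (hV : UDecrease X₀ X f U V) : ContinuousOn V X :=
  hV.2.1

lemma UDecrease.isCompact_band (hV : UDecrease X₀ X f U V) (ha : 0 ≤ a) (hab : a ≤ b) :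
    IsCompact {x ∈ X | a ≤ V x ∧ V x ≤ b} :=
  hV.2.2.1 a b ha hab

lemma UDecrease.continuousOn_comp (hV : UDecrease X₀ X f U V) {I : Set ℝ}
    (hξ : IsTrajectoryOn X f ω ξ I) : ContinuousOn (V ∘ ξ) I :=
  hV.continuousOn.comp hξ.locallyLipschitzOn.continuousOn hξ.mapsTo

lemma UDecrease.exists_eventually_nhds_decaysAt
    (hf : ContinuousOn (fun p : E × 𝒰 => f p.1 p.2) (X₀ ×ˢ univ)) (hV : UDecrease X₀ X f U V)
    {x : E} (hx : x ∈ X) (hVx : V x ≠ 0) {u : 𝒰} (hu : u ∈ U) :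
    ∃ δ > 0, ∀ᶠ p in 𝓝 (x, u), DecaysAt X f V δ p.1 p.2 := by
  obtain ⟨W, g, hW, hxW, hWX₀, hg, hgV, hneg⟩ := hV.2.2.2 x hx hVx
  obtain ⟨δ, hδ, hgδ⟩ : ∃ δ > 0, fderiv ℝ g x (f x u) < -δ :=
    ⟨-fderiv ℝ g x (f x u) / 2, by linarith [hneg u hu], by linarith [hneg u hu]⟩
  have hgx : ContDiffAt ℝ 1 g x := hg.contDiffAt (hW.mem_nhds hxW)
  have hfx : ContinuousAt (fun p : E × 𝒰 => f p.1 p.2) (x, u) :=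
    hf.continuousAt (prod_mem_nhds (mem_of_superset (hW.mem_nhds hxW) hWX₀) univ_mem)
  have hcont : ContinuousAt (fun p : E × 𝒰 => fderiv ℝ g p.1 (f p.1 p.2)) (x, u) :=
    ((hgx.continuousAt_fderiv one_ne_zero).comp continuousAt_fst).clm_apply hfx
  refine ⟨δ, hδ, ?_⟩
  filter_upwards [hcont.eventually_lt_const hgδ,
    continuousAt_fst.eventually (hW.mem_nhds hxW)] with p hp hpW
  refine ⟨g, hg.contDiffAt (hW.mem_nhds hpW), ?_, hp.le⟩
  filter_upwards [mem_nhdsWithin_of_mem_nhds (hW.mem_nhds hpW), self_mem_nhdsWithin] with z hz hzX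
  exact (hgV z ⟨hz, hzX⟩).symm

lemma UDecrease.exists_eventually_nhdsSet_decaysAt
    (hf : ContinuousOn (fun p : E × 𝒰 => f p.1 p.2) (X₀ ×ˢ univ)) (hV : UDecrease X₀ X f U V)
    (hU : IsCompact U) (ha : 0 < a) (hab : a ≤ b) :
    ∃ δ > 0, ∀ᶠ u in 𝓝ˢ U, ∀ x ∈ X, V x ∈ Icc a b → DecaysAt X f V δ x u := by
  have hband : IsCompact {x ∈ X | a ≤ V x ∧ V x ≤ b} := hV.isCompact_band ha.le hab
  obtain ⟨δ, hδ, hdec⟩ := exists_pos_eventually_nhdsSet (hband.prod hU)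
    (P := fun δ p => DecaysAt X f V δ p.1 p.2) (fun p => DecaysAt.antitone p.1 p.2)
    fun p hp => hV.exists_eventually_nhds_decaysAt hf hp.1.1 (ha.trans_le hp.1.2.1).ne' hp.2
  rw [hband.nhdsSet_prod_eq hU] at hdec
  obtain ⟨P, hP, Q, hQ, hPQ⟩ := eventually_prod_iff.1 hdec
  exact ⟨δ, hδ, hQ.mono fun u hu x hx hVx => hPQ (hP.self_of_nhdsSet x ⟨hx, hVx⟩) hu⟩

lemma UDecrease.exists_nhdsSet_sublevel_invariant
    (hf : ContinuousOn (fun p : E × 𝒰 => f p.1 p.2) (X₀ ×ˢ univ)) (hV : UDecrease X₀ X f U V)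
    (hU : IsCompact U) (hc : 0 < c) :
    ∃ N ∈ 𝓝ˢ U, ∀ ⦃ω ξ T⦄, IsTrajectoryOn X f ω ξ (Ici T) → (∀ t ≥ T, ω t ∈ N) →
      V (ξ T) ≤ c → ∀ t ≥ T, V (ξ t) ≤ c := by
  obtain ⟨δ, hδ, hdec⟩ := hV.exists_eventually_nhdsSet_decaysAt hf hU (half_pos hc)
    (by linarith : c / 2 ≤ c + 1)
  refine ⟨_, hdec, fun ω ξ T hξ hω hT => ?_⟩
  have hVξ := hV.continuousOn_comp hξ
  refine forall_ge_le_of_eventually_nhdsGT_le hVξ hT fun t ht htc => ?_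
  have hband : ∀ᶠ s in 𝓝[≥] t, V (ξ s) ∈ Icc (c / 2) (c + 1) := by
    have hcont : ContinuousWithinAt (V ∘ ξ) (Ici t) t := (hVξ t ht).mono (Ici_subset_Ici.2 ht)
    refine hcont ?_
    rw [Function.comp_apply, htc]
    exact Icc_mem_nhds (half_lt_self hc) (lt_add_one c)
  obtain ⟨r, hr, hband⟩ := mem_nhdsGE_iff_exists_Ico_subset.1 hband
  filter_upwards [Ioo_mem_nhdsGT hr] with s hs
  have hdrop := (hξ.mono fun q hq => ht.trans hq.1).comp_le_sub hs.1.le fun q hq =>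
    hω q (ht.trans hq.1) _ (hξ.mapsTo (ht.trans hq.1)) (hband ⟨hq.1, hq.2.trans_lt hs.2⟩)
  have : 0 ≤ δ * (s - t) := mul_nonneg hδ.le (sub_nonneg.2 hs.1.le)
  linarith

lemma UDecrease.exists_isCompact_mapsTo
    (hf : ContinuousOn (fun p : E × 𝒰 => f p.1 p.2) (X₀ ×ˢ univ)) (hV : UDecrease X₀ X f U V)
    (hU : IsCompact U) (hω : ∀ t ≥ T, ω t ∈ U) (hξ : IsTrajectoryOn X f ω ξ (Ici T)) :
    ∃ C ⊆ X, IsCompact C ∧ MapsTo ξ (Ici T) C := by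
  have hT : 0 ≤ V (ξ T) := hV.nonneg (hξ.mapsTo self_mem_Ici)
  obtain ⟨N, hN, hinv⟩ := hV.exists_nhdsSet_sublevel_invariant hf hU
    (by linarith : 0 < V (ξ T) + 1)
  have hbound := hinv hξ (fun t ht => subset_of_mem_nhdsSet hN (hω t ht)) (by linarith)
  exact ⟨{x ∈ X | 0 ≤ V x ∧ V x ≤ V (ξ T) + 1}, sep_subset _ _,
    hV.isCompact_band le_rfl (by linarith),
    fun t ht => ⟨hξ.mapsTo ht, hV.nonneg (hξ.mapsTo ht), hbound t ht⟩⟩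

lemma UDecrease.exists_ge_comp_le
    (hf : ContinuousOn (fun p : E × 𝒰 => f p.1 p.2) (X₀ ×ˢ univ)) (hV : UDecrease X₀ X f U V)
    (hU : IsCompact U) (hω : Tendsto ω atTop (𝓝ˢ U)) (hξ : IsTrajectoryOn X f ω ξ (Ici T))
    (hb : ∀ t ≥ T, V (ξ t) ≤ b) (hc : 0 < c) : ∃ t ≥ T, V (ξ t) ≤ c := by
  by_contra! hlt
  obtain ⟨δ, hδ, hdec⟩ := hV.exists_eventually_nhdsSet_decaysAt hf hU hc
    ((hlt T le_rfl).le.trans (hb T le_rfl))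
  obtain ⟨S, hS⟩ := eventually_atTop.1 ((hω.eventually hdec).and (eventually_ge_atTop T))
  have hST : T ≤ S := (hS S le_rfl).2
  have hdrop : ∀ t ≥ S, V (ξ t) ≤ V (ξ S) - δ * (t - S) := fun t ht =>
    (hξ.mono fun q hq => hST.trans hq.1).comp_le_sub ht fun q hq =>
      have hqT := hST.trans hq.1
      (hS q hq.1).1 _ (hξ.mapsTo hqT) ⟨(hlt q hqT).le, hb q hqT⟩
  have hSpos : 0 < V (ξ S) := hc.trans (hlt S hST)
  have htime : S ≤ S + V (ξ S) / δ := le_add_of_nonneg_right (by positivity)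
  have hcancel : δ * (S + V (ξ S) / δ - S) = V (ξ S) := by field_simp; ring
  linarith [hdrop _ htime, hlt _ (hST.trans htime)]

lemma UDecrease.tendsto_comp_zero
    (hf : ContinuousOn (fun p : E × 𝒰 => f p.1 p.2) (X₀ ×ˢ univ)) (hV : UDecrease X₀ X f U V)
    (hU : IsCompact U) (hω : Tendsto ω atTop (𝓝ˢ U)) (hξ : IsTrajectoryOn X f ω ξ (Ici T))
    (hb : ∀ t ≥ T, V (ξ t) ≤ b) : Tendsto (V ∘ ξ) atTop (𝓝 0) := by
  refine tendsto_order.2 ⟨fun c hc => ?_, fun c hc => ?_⟩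
  · filter_upwards [eventually_ge_atTop T] with t ht
    exact hc.trans_le (hV.nonneg (hξ.mapsTo ht))
  obtain ⟨c', hc', hc'c⟩ := exists_between hc
  obtain ⟨N, hN, hinv⟩ := hV.exists_nhdsSet_sublevel_invariant hf hU hc'
  obtain ⟨S, hS⟩ := eventually_atTop.1
    ((hω.eventually_mem hN).and (eventually_ge_atTop T))
  have hξS := hξ.mono (Ici_subset_Ici.2 (hS S le_rfl).2)
  obtain ⟨R, hRS, hR⟩ := hV.exists_ge_comp_le hf hU hω hξS (fun t ht => hb t (hS t ht).2) hc'
  filter_upwards [eventually_ge_atTop R] with t ht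
  exact (hinv (hξS.mono (Ici_subset_Ici.2 hRS)) (fun t ht => (hS t (hRS.trans ht)).1) hR t
    ht).trans_lt hc'c

lemma UDecrease.tendsto_output {𝒴 : Type*} [TopologicalSpace 𝒴] {C : Set E} {h : E → 𝒴}
    (hf : ContinuousOn (fun p : E × 𝒰 => f p.1 p.2) (X₀ ×ˢ univ)) (hV : UDecrease X₀ X f U V)
    (hU : IsCompact U) (hω : Tendsto ω atTop (𝓝ˢ U)) (hξ : IsTrajectoryOn X f ω ξ (Ici T))
    (hC : IsCompact C) (hCX : C ⊆ X) (hξC : MapsTo ξ (Ici T) C) (hh : ContinuousOn h X) :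
    Tendsto (h ∘ ξ) atTop (𝓝ˢ (h '' ZV X V)) := by
  obtain ⟨b, hb⟩ := hC.bddAbove_image (hV.continuousOn.mono hCX)
  have hzero : Tendsto (V ∘ ξ) atTop (𝓝 0) :=
    hV.tendsto_comp_zero hf hU hω hξ fun t ht => hb (mem_image_of_mem V (hξC ht))
  have houtput := tendsto_comp_nhdsSet_image hC (hV.continuousOn.mono hCX) (hh.mono hCX)
    ((eventually_ge_atTop T).mono fun _ ht => hξC ht) hzero
  exact houtput.mono_right (nhdsSet_mono (image_mono fun _ hx => ⟨hCX hx.1, hx.2⟩))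

end Decrease

lemma extK_coe (γ : ℝ≥0 → ℝ≥0) (r : ℝ≥0) : extK γ r = γ r := by
  simp only [extK, ENNReal.coe_ne_top, if_false, ENNReal.toNNReal_coe]

theorem stmt17_general {E 𝒰 𝒴 : Type*} [NormedAddCommGroup E] [NormedSpace ℝ E]
    [PseudoMetricSpace 𝒰] [MetricSpace 𝒴] {X₀ X : Set E} {f : E → 𝒰 → E}
    (hf : ContinuousOn (fun p : E × 𝒰 => f p.1 p.2) (X₀ ×ˢ univ))
    {h : E → 𝒴} (hh : ContinuousOn h X) {γ : ℝ≥0 → ℝ≥0} (hγ : γ 0 = 0)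
    (hV : ∀ U : Set 𝒰, IsCompact U → ∃ V : E → ℝ, UDecrease X₀ X f U V ∧
      Metric.ediam (h '' ZV X V) ≤ extK γ (Metric.ediam U))
    {ω₁ ω₂ : ℝ → 𝒰} (hpre₁ : Precomp ω₁) (hpre₂ : Precomp ω₂) {u₁ u₂ : 𝒰}
    (hω₁ : Tendsto ω₁ atTop (𝓝 u₁)) (hω₂ : Tendsto ω₂ atTop (𝓝 u₂)) {ξ₁ ξ₂ : ℝ → E}
    (hξ₁ : IsTrajectoryOn X f ω₁ ξ₁ (Ici 0)) (hξ₂ : IsTrajectoryOn X f ω₂ ξ₂ (Ici 0)) :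
    ∃ y₁ y₂ : 𝒴, Tendsto (h ∘ ξ₁) atTop (𝓝 y₁) ∧ Tendsto (h ∘ ξ₂) atTop (𝓝 y₂) ∧
      nndist y₁ y₂ ≤ γ (nndist u₁ u₂) := by
  have houtput : ∀ {U : Set 𝒰} {V : E → ℝ} {ω ξ u}, IsCompact U → UDecrease X₀ X f U V →
      u ∈ U → Precomp ω → Tendsto ω atTop (𝓝 u) → IsTrajectoryOn X f ω ξ (Ici 0) →
        Tendsto (h ∘ ξ) atTop (𝓝ˢ (h '' ZV X V)) := by
    rintro U V ω ξ u hU hVU hu ⟨K, hK, hωK⟩ hω hξ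
    obtain ⟨VK, hVK, -⟩ := hV K hK
    obtain ⟨C, hCX, hC, hξC⟩ := hVK.exists_isCompact_mapsTo hf hK hωK hξ
    exact hVU.tendsto_output hf hU (hω.mono_right (nhds_le_nhdsSet hu)) hξ hC hCX hξC hh
  have hlimit : ∀ {ω ξ u}, Precomp ω → Tendsto ω atTop (𝓝 u) →
      IsTrajectoryOn X f ω ξ (Ici 0) → ∃ y, Tendsto (h ∘ ξ) atTop (𝓝 y) := by
    intro ω ξ u hpre hω hξ
    obtain ⟨V, hVu, hdiam⟩ := hV {u} isCompact_singleton
    have hsub : (h '' ZV X V).Subsingleton := by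
      rw [Metric.ediam_singleton, ← ENNReal.coe_zero, extK_coe, hγ] at hdiam
      exact Metric.ediam_eq_zero_iff.1 (nonpos_iff_eq_zero.1 hdiam)
    exact exists_tendsto_nhds_of_tendsto_nhdsSet_subsingleton hsub
      (houtput isCompact_singleton hVu rfl hpre hω hξ)
  obtain ⟨y₁, hy₁⟩ := hlimit hpre₁ hω₁ hξ₁
  obtain ⟨y₂, hy₂⟩ := hlimit hpre₂ hω₂ hξ₂
  refine ⟨y₁, y₂, hy₁, hy₂, ?_⟩
  have hU : IsCompact ({u₁, u₂} : Set 𝒰) := (toFinite _).isCompact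
  obtain ⟨V, hVU, hdiam⟩ := hV {u₁, u₂} hU
  have hle : edist y₁ y₂ ≤ γ (nndist u₁ u₂) :=
    calc edist y₁ y₂ ≤ Metric.ediam (h '' ZV X V) :=
          edist_le_ediam_of_tendsto_nhdsSet (houtput hU hVU (by simp) hpre₁ hω₁ hξ₁)
            (houtput hU hVU (by simp) hpre₂ hω₂ hξ₂) hy₁ hy₂
      _ ≤ extK γ (Metric.ediam {u₁, u₂}) := hdiam
      _ = γ (nndist u₁ u₂) := by rw [Metric.ediam_pair, edist_nndist, extK_coe]
  rwa [edist_nndist, ENNReal.coe_le_coe] at hle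

/-- Theorem 1, incremental limit gain part: the behavior of
`ẋ = f(x,u)`, `y = h(x)` has incremental limit gain γ. -/
theorem stmt17 {n : ℕ} {𝒰 𝒴 : Type*} [MetricSpace 𝒰] [CompleteSpace 𝒰]
    [MeasurableSpace 𝒰] [BorelSpace 𝒰] [MetricSpace 𝒴] [CompleteSpace 𝒴]
    (X₀ X : Set (Fin n → ℝ)) (hX₀ : IsOpen X₀) (hXsub : X ⊆ X₀)
    (f : (Fin n → ℝ) → 𝒰 → (Fin n → ℝ))
    (hf : ContinuousOn (fun p : (Fin n → ℝ) × 𝒰 => f p.1 p.2) (X₀ ×ˢ (Set.univ : Set 𝒰)))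
    (h : (Fin n → ℝ) → 𝒴) (hh : ContinuousOn h X)
    (γ : ℝ≥0 → ℝ≥0) (hγ : KInfty γ)
    (VU : Set 𝒰 → ((Fin n → ℝ) → ℝ))
    (hVU : ∀ U : Set 𝒰, IsCompact U → UDecrease X₀ X f U (VU U) ∧
      EMetric.diam (h '' ZV X (VU U)) ≤ extK γ (EMetric.diam U))
    (ω₁ ω₂ : ℝ → 𝒰) (hmeas₁ : Measurable ω₁) (hmeas₂ : Measurable ω₂)
    (hpre₁ : Precomp ω₁) (hpre₂ : Precomp ω₂) (u₁ u₂ : 𝒰)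
    (hlim₁ : Filter.Tendsto ω₁ Filter.atTop (nhds u₁))
    (hlim₂ : Filter.Tendsto ω₂ Filter.atTop (nhds u₂))
    (ξ₁ ξ₂ : ℝ → (Fin n → ℝ)) (hξlip₁ : LocallyLipschitz ξ₁) (hξlip₂ : LocallyLipschitz ξ₂)
    (hξX₁ : ∀ t : ℝ, 0 ≤ t → ξ₁ t ∈ X) (hξX₂ : ∀ t : ℝ, 0 ≤ t → ξ₂ t ∈ X)
    (hode₁ : ∀ᵐ t : ℝ ∂volume, 0 ≤ t → HasDerivAt ξ₁ (f (ξ₁ t) (ω₁ t)) t)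
    (hode₂ : ∀ᵐ t : ℝ ∂volume, 0 ≤ t → HasDerivAt ξ₂ (f (ξ₂ t) (ω₂ t)) t) :
    ∃ y₁ y₂ : 𝒴,
      Filter.Tendsto (fun t => h (ξ₁ t)) Filter.atTop (nhds y₁) ∧
      Filter.Tendsto (fun t => h (ξ₂ t)) Filter.atTop (nhds y₂) ∧
      nndist y₁ y₂ ≤ γ (nndist u₁ u₂) :=
  stmt17_general hf hh hγ.2.2.1 (fun U hU => ⟨VU U, hVU U hU⟩) hpre₁ hpre₂ hlim₁ hlim₂
    ⟨hξlip₁.locallyLipschitzOn, hξX₁, hode₁⟩ ⟨hξlip₂.locallyLipschitzOn, hξX₂, hode₂⟩
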